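/- Fix a labelled Markov chain ⟨S, L, τ, ℓ⟩. For every probabilistic bisimulation R ⊆ S×S with ≃ ⊆ R ⊆ ∼, the relation Refine(R) is a probabilistic bisimulation with ≃ ⊆ Refine(R) ⊆ ∼. (In particular, membership of R in the interval [≃, ∼] of bisimulations is a loop invariant of the iteration R ↦ Refine(R).) -/

import Mathlib

open Finset Filter
open scoped Classical

/-- `μ` is a probability distribution on the finite type `X`. -/
def IsDist {X : Type*} [Fintype X] (μ : X → ℝ) : Prop :=
  (∀ x, 0 ≤ μ x) ∧ ∑ x, μ x = 1

/-- `ω` is a coupling of the distributions `μ` and `ν`. -/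
def IsCoupling {X : Type*} [Fintype X] (ω : X × X → ℝ) (μ ν : X → ℝ) : Prop :=
  IsDist ω ∧ (∀ x, ∑ y, ω (x, y) = μ x) ∧ (∀ x, ∑ y, ω (y, x) = ν x)

/-- Total variation distance: the maximum pointwise difference. -/
noncomputable def dTV {X : Type*} [Fintype X] (μ ν : X → ℝ) : ℝ :=
  ⨆ x, |μ x - ν x|

/-- The support of a (sub)distribution: points of positive probability. -/
def psupp {X : Type*} (μ : X → ℝ) : Set X := {x | 0 < μ x}

/-- Distance between functions into distributions. -/
noncomputable def dF {A B : Type*} [Fintype B] (f g : A → B → ℝ) : ℝ :=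
  ⨆ a, dTV (f a) (g a)

/-- `τ` is a transition probability function on `S`. -/
def IsTransFn {S : Type*} [Fintype S] (τ : S → S → ℝ) : Prop := ∀ s, IsDist (τ s)

/-- The diagonal `S²_Δ`. -/
def SDelta (S : Type*) : Set (S × S) := {p | p.1 = p.2}

/-- `P` is a policy for `τ` (with labelling `ℓ`). -/
def IsPolicy {S L : Type*} [Fintype S] (ℓ : S → L) (τ : S → S → ℝ)
    (P : S × S → S × S → ℝ) : Prop :=
  (∀ p, IsDist (P p)) ∧
  (∀ p : S × S, ℓ p.1 = ℓ p.2 → IsCoupling (P p) (τ p.1) (τ p.2)) ∧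
  (∀ p : S × S, ℓ p.1 ≠ ℓ p.2 → psupp (P p) = {p})

/-- A policy is `S²_Δ`-closed if the support of `P (s,s)` lies in the diagonal. -/
def DeltaClosed {S : Type*} (P : S × S → S × S → ℝ) : Prop :=
  ∀ s : S, psupp (P (s, s)) ⊆ SDelta S

/-- `d` is a `[0,1]`-valued function. -/
def Is01 {A : Type*} (d : A → ℝ) : Prop := ∀ a, 0 ≤ d a ∧ d a ≤ 1

/-- `d` is the least fixed point of `F` on the complete lattice of `[0,1]`-valued functions. -/
def IsLfpOn {A : Type*} (F : (A → ℝ) → (A → ℝ)) (d : A → ℝ) : Prop :=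
  Is01 d ∧ F d = d ∧ ∀ e, Is01 e → F e = e → ∀ a, d a ≤ e a

/-- The map `Γ_P` whose least fixed point is `γ_P`. -/
noncomputable def GammaF {S L : Type*} [Fintype S] (ℓ : S → L)
    (P : S × S → S × S → ℝ) (d : S × S → ℝ) : S × S → ℝ :=
  fun p => if ℓ p.1 ≠ ℓ p.2 then 1 else ∑ q, P p q * d q

/-- The map `Δ_τ` whose least fixed point is the probabilistic bisimilarity distance `δ_τ`. -/
noncomputable def DeltaF {S L : Type*} [Fintype S] (ℓ : S → L)
    (τ : S → S → ℝ) (d : S × S → ℝ) : S × S → ℝ :=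
  fun p => if ℓ p.1 ≠ ℓ p.2 then 1
    else sInf {r | ∃ ω, IsCoupling ω (τ p.1) (τ p.2) ∧ r = ∑ q, ω q * d q}

/-- The map whose least fixed point is `ρ_P`, the probability of reaching `S²_Δ`. -/
noncomputable def ReachF {S : Type*} [Fintype S]
    (P : S × S → S × S → ℝ) (e : S × S → ℝ) : S × S → ℝ :=
  fun p => if p.1 = p.2 then 1 else ∑ q, P p q * e q

/-- States `s` and `t` are robustly probabilistically bisimilar. -/
def Robust {S L : Type*} [Fintype S] (ℓ : S → L) (τ : S → S → ℝ) (s t : S) : Prop :=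
  ∃ P ρ, IsPolicy ℓ τ P ∧ IsLfpOn (ReachF P) ρ ∧ ρ (s, t) = 1

/-- `R` is a probabilistic bisimulation. -/
def IsBisim {S L : Type*} [Fintype S] (ℓ : S → L) (τ : S → S → ℝ)
    (R : Set (S × S)) : Prop :=
  Equivalence (fun s t => (s, t) ∈ R) ∧
  ∀ p ∈ R, ℓ p.1 = ℓ p.2 ∧ ∃ ω, IsCoupling ω (τ p.1) (τ p.2) ∧ psupp ω ⊆ R

/-- Probabilistic bisimilarity `∼`. -/
def Bisimilar {S L : Type*} [Fintype S] (ℓ : S → L) (τ : S → S → ℝ) (s t : S) : Prop :=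
  ∃ R, IsBisim ℓ τ R ∧ (s, t) ∈ R

/-- A step of a path in `⟨S×S, P⟩` supported by `R`. -/
def SupStep {S : Type*} (P : S × S → S × S → ℝ) (R : Set (S × S)) (a b : S × S) : Prop :=
  a ∈ R ∧ psupp (P a) ⊆ R ∧ 0 < P a b

/-- `R` supports a path from `p` to `S²_Δ` in `⟨S×S, P⟩`. -/
def SupportsPathToDelta {S : Type*} (P : S × S → S × S → ℝ) (R : Set (S × S))
    (p : S × S) : Prop :=
  ∃ q : S × S, q.1 = q.2 ∧ Relation.ReflTransGen (SupStep P R) p q ∧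
    q ∈ R ∧ psupp (P q) ⊆ R

/-- `R` is a robust bisimulation. -/
def IsRobustBisim {S L : Type*} [Fintype S] (ℓ : S → L) (τ : S → S → ℝ)
    (R : Set (S × S)) : Prop :=
  IsBisim ℓ τ R ∧ ∀ p ∈ R, ∃ P, IsPolicy ℓ τ P ∧ SupportsPathToDelta P R p

/-- The function `Filter` from the algorithm. -/
def FilterFn {S L : Type*} [Fintype S] (ℓ : S → L) (τ : S → S → ℝ)
    (R : Set (S × S)) : Set (S × S) :=
  {p ∈ R | ∃ P, IsPolicy ℓ τ P ∧ SupportsPathToDelta P R p}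

/-- The function `Prune` from the algorithm. -/
def PruneFn {S : Type*} (Q : Set (S × S)) : Set (S × S) :=
  {p ∈ Q | ∀ u : S, ((p.2, u) ∈ Q → (p.1, u) ∈ Q) ∧ ((u, p.1) ∈ Q → (u, p.2) ∈ Q)}

/-- `B` is the greatest probabilistic bisimulation contained in `Q` (i.e. `B = Bisim(Q)`). -/
def IsGreatestBisimIn {S L : Type*} [Fintype S] (ℓ : S → L) (τ : S → S → ℝ)
    (Q B : Set (S × S)) : Prop :=
  IsBisim ℓ τ B ∧ B ⊆ Q ∧ ∀ B', IsBisim ℓ τ B' → B' ⊆ Q → B' ⊆ B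

/-- Reachability in the Markov chain `⟨S×S, P⟩`. -/
def Reach {S : Type*} (P : S × S → S × S → ℝ) (p q : S × S) : Prop :=
  Relation.ReflTransGen (fun a b => 0 < P a b) p q

/-- `C` is a communication class of `⟨S×S, P⟩`. -/
def IsCommClass {S : Type*} (P : S × S → S × S → ℝ) (C : Set (S × S)) : Prop :=
  ∃ p, C = {q | Reach P p q ∧ Reach P q p}

/-- `C` is closed: no transition of positive probability leaves `C`. -/
def IsClosedClass {S : Type*} (P : S × S → S × S → ℝ) (C : Set (S × S)) : Prop :=
  ∀ p ∈ C, psupp (P p) ⊆ C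

/-- `R`-supported attractor of the diagonal, with path length. -/
inductive AttN {S : Type*} [Fintype S] (τ : S → S → ℝ) (X : Set (S × S)) : ℕ → S × S → Prop
  | diag (p : S × S) (h : p.1 = p.2) : AttN τ X 0 p
  | step (n : ℕ) (p q : S × S) (ω : S × S → ℝ) (hp : p ∈ X)
      (hω : IsCoupling ω (τ p.1) (τ p.2)) (hs : psupp ω ⊆ X) (hq : 0 < ω q)
      (h : AttN τ X n q) : AttN τ X (n + 1) p

def Att {S : Type*} [Fintype S] (τ : S → S → ℝ) (X : Set (S × S)) (p : S × S) : Prop :=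
  ∃ n, AttN τ X n p

def Good {S L : Type*} [Fintype S] (ℓ : S → L) (τ : S → S → ℝ) (X : Set (S × S)) : Prop :=
  (∀ s, (s, s) ∈ X) ∧ ∀ p ∈ X, ℓ p.1 = ℓ p.2 ∧ Att τ X p

lemma isDist_of_marg {X : Type*} [Fintype X] (ω : X × X → ℝ) (μ : X → ℝ) (hμ : IsDist μ)
    (h0 : ∀ p, 0 ≤ ω p) (h1 : ∀ x, ∑ y, ω (x, y) = μ x) : IsDist ω := by
  refine ⟨h0, ?_⟩
  rw [Fintype.sum_prod_type]
  simp only [h1]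
  exact hμ.2

lemma diag_coupling {X : Type*} [Fintype X] (μ : X → ℝ) (hμ : IsDist μ) :
    ∃ ω, IsCoupling ω μ μ ∧ ∀ p, 0 < ω p → p.1 = p.2 := by
  have h1 : ∀ x, ∑ y, (if x = y then μ x else 0) = μ x := by intro x; simp
  refine ⟨fun p => if p.1 = p.2 then μ p.1 else 0, ⟨isDist_of_marg _ μ hμ ?_ h1, h1, ?_⟩, ?_⟩
  · intro p
    split_ifs
    · exact hμ.1 _
    · exact le_rfl
  · intro x; simp
  · intro p hp
    by_contra h
    simp [h] at hp

lemma prod_coupling {X : Type*} [Fintype X] (μ ν : X → ℝ) (hμ : IsDist μ) (hν : IsDist ν) :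
    ∃ ω, IsCoupling ω μ ν := by
  have h1 : ∀ x, ∑ y, μ x * ν y = μ x := by
    intro x; rw [← Finset.mul_sum, hν.2, mul_one]
  refine ⟨fun p => μ p.1 * ν p.2, isDist_of_marg _ μ hμ ?_ h1, h1, ?_⟩
  · intro p; exact mul_nonneg (hμ.1 _) (hν.1 _)
  · intro x
    show ∑ y, μ y * ν x = ν x
    rw [← Finset.sum_mul, hμ.2, one_mul]

lemma swap_coupling {X : Type*} [Fintype X] {ω : X × X → ℝ} {μ ν : X → ℝ}
    (h : IsCoupling ω μ ν) : IsCoupling (fun p => ω p.swap) ν μ := by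
  refine ⟨⟨fun p => h.1.1 _, ?_⟩, h.2.2, h.2.1⟩
  rw [← h.1.2]
  exact Equiv.sum_comp (Equiv.prodComm X X) ω

lemma glue_coupling {X : Type*} [Fintype X] {ω₁ ω₂ : X × X → ℝ} {μ ν κ : X → ℝ}
    (hμ : IsDist μ) (h₁ : IsCoupling ω₁ μ ν) (h₂ : IsCoupling ω₂ ν κ) :
    ∃ ω, IsCoupling ω μ κ ∧ (∀ a c, 0 < ω (a, c) → ∃ b, 0 < ω₁ (a, b) ∧ 0 < ω₂ (b, c)) ∧
      (∀ a b c, 0 < ω₁ (a, b) → 0 < ω₂ (b, c) → 0 < ω (a, c)) := by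
  have n1 := h₁.1.1
  have n2 := h₂.1.1
  have l1 : ∀ a b, ω₁ (a, b) ≤ ν b := fun a b => by
    rw [← h₁.2.2 b]
    exact Finset.single_le_sum (f := fun y => ω₁ (y, b)) (fun i _ => n1 _) (Finset.mem_univ a)
  have l2 : ∀ b c, ω₂ (b, c) ≤ ν b := fun b c => by
    rw [← h₂.2.1 b]
    exact Finset.single_le_sum (f := fun y => ω₂ (b, y)) (fun i _ => n2 _) (Finset.mem_univ c)
  have nν : ∀ b, 0 ≤ ν b := fun b => (n1 (b, b)).trans (l1 b b)
  have nt : ∀ a b c, 0 ≤ ω₁ (a, b) * ω₂ (b, c) / ν b := fun a b c =>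
    div_nonneg (mul_nonneg (n1 _) (n2 _)) (nν b)
  have e1 : ∀ a, ∑ c, ∑ b, ω₁ (a, b) * ω₂ (b, c) / ν b = μ a := by
    intro a
    rw [Finset.sum_comm, ← h₁.2.1 a]
    refine Finset.sum_congr rfl fun b _ => ?_
    rw [← Finset.sum_div, ← Finset.mul_sum, h₂.2.1]
    by_cases hb : ν b = 0
    · have := l1 a b
      have := n1 (a, b)
      rw [hb] at *
      simp; linarith
    · field_simp
  have e2 : ∀ c, ∑ a, ∑ b, ω₁ (a, b) * ω₂ (b, c) / ν b = κ c := by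
    intro c
    rw [Finset.sum_comm, ← h₂.2.2 c]
    refine Finset.sum_congr rfl fun b _ => ?_
    rw [← Finset.sum_div, ← Finset.sum_mul, h₁.2.2]
    by_cases hb : ν b = 0
    · have := l2 b c
      have := n2 (b, c)
      rw [hb] at *
      simp; linarith
    · field_simp
  refine ⟨fun p => ∑ b, ω₁ (p.1, b) * ω₂ (b, p.2) / ν b,
    ⟨isDist_of_marg _ μ hμ ?_ e1, e1, e2⟩, ?_, ?_⟩
  · intro p; exact Finset.sum_nonneg fun b _ => nt _ _ _
  · intro a c h
    obtain ⟨b, _, hb⟩ := Finset.exists_ne_zero_of_sum_ne_zero h.ne'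
    refine ⟨b, (n1 _).lt_of_ne ?_, (n2 _).lt_of_ne ?_⟩
    · intro h0; apply hb; simp [← h0]
    · intro h0; apply hb; simp [← h0]
  · intro a b c ha hc
    refine lt_of_lt_of_le ?_ (Finset.single_le_sum
      (f := fun b => ω₁ (a, b) * ω₂ (b, c) / ν b) (fun i _ => nt a i c) (Finset.mem_univ b))
    exact div_pos (mul_pos ha hc) (ha.trans_le (l1 a b))

section
variable {S L : Type*} [Fintype S] {ℓ : S → L} {τ : S → S → ℝ}

lemma att_mono {X Y : Set (S × S)} (h : X ⊆ Y) {p : S × S} (hp : Att τ X p) : Att τ Y p := by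
  obtain ⟨n, hn⟩ := hp
  refine ⟨n, ?_⟩
  induction hn with
  | diag p h => exact .diag p h
  | step n p q ω hp hω hs hq _ ih => exact .step n p q ω (h hp) hω (hs.trans h) hq ih

lemma att_swap {X : Set (S × S)} {p : S × S} (hp : Att τ X p) :
    Att τ (Prod.swap ⁻¹' X) p.swap := by
  obtain ⟨n, hn⟩ := hp
  refine ⟨n, ?_⟩
  induction hn with
  | diag p h => exact .diag _ h.symm
  | step n p q ω hp hω hs hq _ ih =>
    exact .step n p.swap q.swap (fun p => ω p.swap) (by simpa using hp) (swap_coupling hω)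
      (fun x hx => hs hx) (by simpa using hq) ih

lemma att_coupling (hτ : IsTransFn τ) {X : Set (S × S)} (hd : ∀ s, (s, s) ∈ X) {p : S × S}
    (hp : Att τ X p) : ∃ ω, IsCoupling ω (τ p.1) (τ p.2) ∧ psupp ω ⊆ X := by
  obtain ⟨n, hn⟩ := hp
  cases hn with
  | diag _ h =>
    obtain ⟨ω, h1, h2⟩ := diag_coupling (τ p.1) (hτ _)
    refine ⟨ω, h ▸ h1, ?_⟩
    rintro ⟨a, b⟩ hx
    have : a = b := h2 _ hx
    exact this ▸ hd a
  | step n _ q ω hp hω hs hq _ => exact ⟨ω, hω, hs⟩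

lemma att_comp (hτ : IsTransFn τ) {X Y Z : Set (S × S)}
    (hc : ∀ p ∈ X, ∃ ω, IsCoupling ω (τ p.1) (τ p.2) ∧ psupp ω ⊆ X)
    (hXZ : ∀ p ∈ X, Att τ Z p)
    (hZ : ∀ a b c, (a, b) ∈ X → (b, c) ∈ Y → (a, c) ∈ Z)
    {p : S × S} (hp : Att τ Y p) : ∀ s, (s, p.1) ∈ X → Att τ Z (s, p.2) := by
  obtain ⟨n, hn⟩ := hp
  induction hn with
  | diag p h => intro s hs; rw [← h]; exact hXZ _ hs
  | step n p q ω hp hω hs hq _ ih =>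
    intro s hX
    obtain ⟨ω₁, h1, h1s⟩ := hc _ hX
    obtain ⟨ω', h', hs', hp'⟩ := glue_coupling (hτ s) h1 hω
    have hpos : 0 < ∑ y, ω₁ (y, q.1) := by
      rw [h1.2.2, ← hω.2.1]
      exact lt_of_lt_of_le hq (Finset.single_le_sum (f := fun y => ω (q.1, y))
        (fun i _ => hω.1.1 _) (Finset.mem_univ q.2))
    obtain ⟨s', _, hb⟩ := Finset.exists_ne_zero_of_sum_ne_zero hpos.ne'
    have hb : 0 < ω₁ (s', q.1) := (h1.1.1 _).lt_of_ne hb.symm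
    obtain ⟨m, hm⟩ := ih s' (h1s hb)
    refine ⟨m + 1, .step m _ (s', q.2) ω' (hZ _ _ _ hX hp) h' ?_ (hp' _ _ _ hb hq) hm⟩
    rintro ⟨a, c⟩ hac
    obtain ⟨b, hb1, hb2⟩ := hs' a c hac
    exact hZ _ _ _ (h1s hb1) (hs hb2)

lemma exists_policy (hτ : IsTransFn τ) {X : Set (S × S)} (hd : ∀ s, (s, s) ∈ X)
    (hl : ∀ p ∈ X, ℓ p.1 = ℓ p.2) :
    ∃ P, IsPolicy ℓ τ P ∧ ∀ p ∈ X, Att τ X p → SupportsPathToDelta P X p ∧ psupp (P p) ⊆ X := by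
  have key : ∀ p : S × S, ∃ ω : S × S → ℝ, IsDist ω ∧
      (ℓ p.1 = ℓ p.2 → IsCoupling ω (τ p.1) (τ p.2)) ∧ (ℓ p.1 ≠ ℓ p.2 → psupp ω = {p}) ∧
      (p ∈ X → ∀ h : Att τ X p, psupp ω ⊆ X ∧
        (p.1 = p.2 ∨ ∃ q, 0 < ω q ∧ ∃ m < Nat.find h, AttN τ X m q)) := by
    intro p
    by_cases hpl : ℓ p.1 = ℓ p.2
    · by_cases hA : p ∈ X ∧ Att τ X p
      · obtain ⟨hpX, h⟩ := hA
        by_cases hpd : p.1 = p.2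
        · obtain ⟨ω, h1, h2⟩ := att_coupling hτ hd h
          exact ⟨ω, h1.1, fun _ => h1, fun h => absurd hpl h, fun _ _ => ⟨h2, .inl hpd⟩⟩
        · have hf := Nat.find_spec h
          generalize hn : Nat.find h = n at hf
          cases hf with
          | diag _ h => exact absurd h hpd
          | step n _ q ω hp hω hs hq hqn =>
            exact ⟨ω, hω.1, fun _ => hω, fun h => absurd hpl h, fun _ _ =>
              ⟨hs, .inr ⟨q, hq, n, by omega, hqn⟩⟩⟩
      · obtain ⟨ω, hω⟩ := prod_coupling _ _ (hτ p.1) (hτ p.2)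
        exact ⟨ω, hω.1, fun _ => hω, fun h => absurd hpl h, fun h1 h2 => absurd ⟨h1, h2⟩ hA⟩
    · refine ⟨fun q => if q = p then 1 else 0, ⟨?_, by simp⟩, fun h => absurd h hpl, ?_,
        fun h => absurd (hl p h) hpl⟩
      · intro x; dsimp only; split_ifs <;> norm_num
      · intro _
        ext q
        by_cases hq : q = p <;> simp [psupp, hq]
  choose P hP1 hP2 hP3 hP4 using key
  refine ⟨P, ⟨hP1, hP2, hP3⟩, ?_⟩
  have : ∀ n p, p ∈ X → AttN τ X n p → SupportsPathToDelta P X p ∧ psupp (P p) ⊆ X := by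
    intro n
    induction n using Nat.strong_induction_on with
    | _ n ih =>
      intro p hp hn
      have hA : Att τ X p := ⟨n, hn⟩
      obtain ⟨hs, h⟩ := hP4 p hp hA
      refine ⟨?_, hs⟩
      rcases h with h | ⟨q, hq, m, hm, hqm⟩
      · exact ⟨p, h, .refl, hp, hs⟩
      · have := Nat.find_min' hA hn
        obtain ⟨⟨r, h1, h2, h3⟩, _⟩ := ih m (by omega) q (hs hq) hqm
        exact ⟨r, h1, .head ⟨hp, hs, hq⟩ h2, h3⟩
  rintro p hp ⟨n, hn⟩
  exact this n p hp hn

lemma filter_iff (hτ : IsTransFn τ) {R : Set (S × S)} (hR : IsBisim ℓ τ R) (p : S × S) :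
    p ∈ FilterFn ℓ τ R ↔ p ∈ R ∧ Att τ R p := by
  constructor
  · rintro ⟨hp, P, hP, q, hq, hpath, -, -⟩
    refine ⟨hp, ?_⟩
    clear hp
    induction hpath using Relation.ReflTransGen.head_induction_on with
    | refl => exact ⟨0, .diag _ hq⟩
    | head h _ ih =>
      obtain ⟨n, hn⟩ := ih
      exact ⟨n + 1, .step n _ _ _ h.1 (hP.2.1 _ (hR.2 _ h.1).1) h.2.1 h.2.2 hn⟩
  · rintro ⟨hp, hA⟩
    obtain ⟨P, hP, h⟩ := exists_policy (ℓ := ℓ) hτ (fun s => hR.1.refl s) (fun p hp => (hR.2 p hp).1)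
    exact ⟨hp, P, hP, (h p hp hA).1⟩

lemma reach_mono {P : S × S → S × S → ℝ} (hP : ∀ p, IsDist (P p)) {d e : S × S → ℝ}
    (h : ∀ p, d p ≤ e p) (p : S × S) : ReachF P d p ≤ ReachF P e p := by
  unfold ReachF
  split_ifs
  · exact le_rfl
  · exact Finset.sum_le_sum fun q _ => mul_le_mul_of_nonneg_left (h q) ((hP p).1 q)

lemma reach_01 {P : S × S → S × S → ℝ} (hP : ∀ p, IsDist (P p)) {d : S × S → ℝ}
    (h : Is01 d) : Is01 (ReachF P d) := by
  intro p
  unfold ReachF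
  split_ifs
  · norm_num
  · refine ⟨Finset.sum_nonneg fun q _ => mul_nonneg ((hP p).1 q) (h q).1, ?_⟩
    rw [← (hP p).2]
    exact Finset.sum_le_sum fun q _ => mul_le_of_le_one_right ((hP p).1 q) (h q).2

lemma exists_lfp {P : S × S → S × S → ℝ} (hP : ∀ p, IsDist (P p)) :
    ∃ ρ, IsLfpOn (ReachF P) ρ ∧ ∀ e, Is01 e → (∀ p, ReachF P e p ≤ e p) → ∀ p, ρ p ≤ e p := by
  let A : Set (S × S → ℝ) := {e | Is01 e ∧ ∀ p, ReachF P e p ≤ e p}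
  have hA1 : (fun _ => 1) ∈ A :=
    ⟨fun _ => by norm_num, fun p => (reach_01 hP (fun _ => by norm_num) p).2⟩
  let ρ : S × S → ℝ := fun p => sInf ((fun e : S × S → ℝ => e p) '' A)
  have bdd : ∀ p, BddBelow ((fun e : S × S → ℝ => e p) '' A) := fun p =>
    ⟨0, by rintro _ ⟨e, he, rfl⟩; exact (he.1 p).1⟩
  have low : ∀ e ∈ A, ∀ p, ρ p ≤ e p := fun e he p => csInf_le (bdd p) ⟨e, he, rfl⟩
  have gr : ∀ p c, (∀ e ∈ A, c ≤ e p) → c ≤ ρ p := fun p c h =>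
    le_csInf ⟨_, _, hA1, rfl⟩ (by rintro _ ⟨e, he, rfl⟩; exact h e he)
  have h01 : Is01 ρ := fun p => ⟨gr p 0 fun e he => (he.1 p).1, low _ hA1 p⟩
  have pre : ∀ p, ReachF P ρ p ≤ ρ p := fun p =>
    gr p _ fun e he => (reach_mono hP (low e he) p).trans (he.2 p)
  have post : ∀ p, ρ p ≤ ReachF P ρ p :=
    low _ ⟨reach_01 hP h01, fun p => reach_mono hP pre p⟩
  refine ⟨ρ, ⟨h01, funext fun p => le_antisymm (pre p) (post p), ?_⟩, fun e h1 h2 => low e ⟨h1, h2⟩⟩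
  intro e h1 h2
  exact low e ⟨h1, fun p => by rw [h2]⟩

lemma robust_iff (hτ : IsTransFn τ) (s t : S) :
    Robust ℓ τ s t ↔ ∃ X, Good ℓ τ X ∧ (s, t) ∈ X := by
  constructor
  · rintro ⟨P, ρ, hP, hρ, h1⟩
    obtain ⟨ρ', h', hpre⟩ := exists_lfp hP.1
    have hle : ∀ e, Is01 e → (∀ p, ReachF P e p ≤ e p) → ∀ p, ρ p ≤ e p := fun e he1 he2 p =>
      (hρ.2.2 ρ' h'.1 h'.2.1 p).trans (hpre e he1 he2 p)
    have hfix : ∀ p, ReachF P ρ p = ρ p := fun p => congrFun hρ.2.1 p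
    have hreach : ∀ p, ρ p = 1 → ∃ q : S × S, q.1 = q.2 ∧ Reach P p q := by
      intro p hp
      by_contra hno
      have := hle (fun p => if ∃ q : S × S, q.1 = q.2 ∧ Reach P p q then 1 else 0)
        (fun p => by dsimp only; split_ifs <;> norm_num) (by
          intro p
          by_cases hq : ∃ q : S × S, q.1 = q.2 ∧ Reach P p q
          · rw [if_pos hq]
            exact (reach_01 hP.1 (fun p => by split_ifs <;> norm_num) p).2
          · rw [if_neg hq]
            unfold ReachF
            rw [if_neg (fun h => hq ⟨p, h, .refl⟩)]
            refine Finset.sum_nonpos fun r _ => ?_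
            beta_reduce
            split_ifs with hr
            · obtain ⟨q, hq1, hq2⟩ := hr
              have : ¬ 0 < P p r := fun h => hq ⟨q, hq1, .head h hq2⟩
              linarith
            · simp) p
      simp only [if_neg hno] at this
      linarith
    have hsupp : ∀ p : S × S, p.1 ≠ p.2 → ρ p = 1 → psupp (P p) ⊆ {p | ρ p = 1} := by
      intro p hp h1 q hq
      have hs : ∑ q, P p q * ρ q = 1 := by
        have := hfix p
        unfold ReachF at this
        rwa [if_neg hp, h1] at this
      have h0 : ∑ q, P p q * (1 - ρ q) = 0 := by
        simp only [mul_sub, mul_one, Finset.sum_sub_distrib, hs, (hP.1 p).2, sub_self]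
      have := (Finset.sum_eq_zero_iff_of_nonneg (fun q _ =>
        mul_nonneg ((hP.1 p).1 q) (sub_nonneg.2 (hρ.1 q).2))).1 h0 q (Finset.mem_univ q)
      have hq : P p q ≠ 0 := ne_of_gt hq
      have := (mul_eq_zero.1 this).resolve_left hq
      show ρ q = 1
      linarith
    refine ⟨{p | ρ p = 1}, ⟨fun s => ?_, fun p hp => ?_⟩, h1⟩
    · show ρ (s, s) = 1
      rw [← hfix]; simp [ReachF]
    · obtain ⟨q, hq, hpq⟩ := hreach p hp
      unfold Reach at hpq
      induction hpq using Relation.ReflTransGen.head_induction_on with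
      | refl => exact ⟨congrArg ℓ hq, 0, .diag _ hq⟩
      | @head a c h _ ih =>
        by_cases ha : a.1 = a.2
        · exact ⟨congrArg ℓ ha, 0, .diag _ ha⟩
        have hc := hsupp a ha hp h
        by_cases hl : ℓ a.1 = ℓ a.2
        · obtain ⟨_, n, hn⟩ := ih hc
          exact ⟨hl, n + 1, .step n _ _ _ hp (hP.2.1 _ hl) (hsupp a ha hp) h hn⟩
        · have : c ∈ psupp (P a) := h
          rw [hP.2.2 a hl] at this
          have : c = a := this
          exact this ▸ ih hc
  · rintro ⟨X, hX, hst⟩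
    obtain ⟨P, hP, h⟩ := exists_policy (ℓ := ℓ) hτ hX.1 (fun p hp => (hX.2 p hp).1)
    obtain ⟨ρ, hρ, -⟩ := exists_lfp hP.1
    refine ⟨P, ρ, hP, hρ, ?_⟩
    have hfix : ∀ p, ReachF P ρ p = ρ p := fun p => congrFun hρ.2.1 p
    obtain ⟨p, hpX, hmin⟩ := Set.exists_min_image X ρ (Set.toFinite X) ⟨_, hst⟩
    have hprop : ∀ a b, a ∈ X → ρ a = ρ p → psupp (P a) ⊆ X → a.1 ≠ a.2 → 0 < P a b →
        ρ b = ρ p := by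
      intro a b ha hap hs had hb
      have hsum : ∑ q, P a q * ρ q = ρ p := by
        have := hfix a
        unfold ReachF at this
        rwa [if_neg had, hap] at this
      have h0 : ∑ q, P a q * (ρ q - ρ p) = 0 := by
        simp only [mul_sub, Finset.sum_sub_distrib, hsum, ← Finset.sum_mul, (hP.1 a).2]
        ring
      have := (Finset.sum_eq_zero_iff_of_nonneg (fun q _ => by
        rcases ((hP.1 a).1 q).eq_or_lt with h | h
        · rw [← h, zero_mul]
        · exact mul_nonneg h.le (sub_nonneg.2 (hmin q (hs h))))).1 h0 b (Finset.mem_univ b)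
      have := (mul_eq_zero.1 this).resolve_left hb.ne'
      linarith
    have hdiag : ∀ q : S × S, q.1 = q.2 → ρ q = 1 := fun q hq => by
      rw [← hfix]; simp [ReachF, hq]
    obtain ⟨⟨q, hq, hpath, -⟩, -⟩ := h p hpX (hX.2 p hpX).2
    have hall : ∀ a, Relation.ReflTransGen (SupStep P X) a q → ρ a = ρ p → ρ p = 1 := by
      intro a ha
      induction ha using Relation.ReflTransGen.head_induction_on with
      | refl => intro h; rw [← h]; exact hdiag _ hq
      | @head a c hac _ ih =>
        intro h
        by_cases had : a.1 = a.2
        · rw [← h]; exact hdiag _ had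
        · exact ih (hprop a c hac.1 h hac.2.1 had hac.2.2)
    have h1 := hall p hpath rfl
    have h2 := hmin _ hst
    exact le_antisymm (hρ.1 _).2 (h1 ▸ h2)

lemma good_swap {X : Set (S × S)} (h : Good ℓ τ X) : Good ℓ τ (Prod.swap ⁻¹' X) := by
  refine ⟨h.1, fun p hp => ?_⟩
  obtain ⟨h1, h2⟩ := h.2 _ hp
  exact ⟨h1.symm, by simpa using att_swap h2⟩

lemma good_coupling (hτ : IsTransFn τ) {X : Set (S × S)} (h : Good ℓ τ X) :
    ∀ p ∈ X, ∃ ω, IsCoupling ω (τ p.1) (τ p.2) ∧ psupp ω ⊆ X :=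
  fun p hp => att_coupling hτ h.1 (h.2 p hp).2

lemma good_comp (hτ : IsTransFn τ) {X Y : Set (S × S)} (hX : Good ℓ τ X) (hY : Good ℓ τ Y) :
    Good ℓ τ {p | ∃ b, (p.1, b) ∈ X ∧ (b, p.2) ∈ Y} := by
  refine ⟨fun s => ⟨s, hX.1 s, hY.1 s⟩, ?_⟩
  rintro ⟨s, u⟩ ⟨t, h1, h2⟩
  refine ⟨(hX.2 _ h1).1.trans (hY.2 _ h2).1, ?_⟩
  refine att_comp hτ (X := X) (Y := Y) (Z := {p | ∃ b, (p.1, b) ∈ X ∧ (b, p.2) ∈ Y}) (p := (t, u))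
    (good_coupling hτ hX) ?_ ?_ (hY.2 _ h2).2 s h1
  · intro p hp
    refine att_mono (X := X) ?_ (hX.2 p hp).2
    exact (fun q hq => ⟨q.2, hq, hY.1 _⟩)
  · intro a b c hab hbc
    exact ⟨b, hab, hbc⟩

lemma good_refl (hτ : IsTransFn τ) : Good ℓ τ {p : S × S | p.1 = p.2} :=
  ⟨fun _ => rfl, fun p hp => ⟨congrArg ℓ hp, 0, .diag _ hp⟩⟩

lemma robust_bisim (hτ : IsTransFn τ) : IsBisim ℓ τ {p : S × S | Robust ℓ τ p.1 p.2} := by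
  refine ⟨⟨fun s => ?_, fun {s t} h => ?_, fun {s t u} h1 h2 => ?_⟩, fun p hp => ?_⟩
  · exact (robust_iff hτ s s).2 ⟨_, good_refl hτ, rfl⟩
  · obtain ⟨X, hX, h⟩ := (robust_iff hτ _ _).1 h
    exact (robust_iff hτ _ _).2 ⟨_, good_swap hX, h⟩
  · obtain ⟨X, hX, h1⟩ := (robust_iff hτ _ _).1 h1
    obtain ⟨Y, hY, h2⟩ := (robust_iff hτ _ _).1 h2
    exact (robust_iff hτ _ _).2 ⟨_, good_comp hτ hX hY, t, h1, h2⟩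
  · obtain ⟨X, hX, h⟩ := (robust_iff hτ _ _).1 hp
    obtain ⟨ω, h1, h2⟩ := good_coupling hτ hX _ h
    exact ⟨(hX.2 _ h).1, ω, h1, fun q hq => (robust_iff hτ _ _).2 ⟨X, hX, h2 hq⟩⟩

lemma filter_left (hτ : IsTransFn τ) {R : Set (S × S)} (hR : IsBisim ℓ τ R)
    (hlow : {p : S × S | Robust ℓ τ p.1 p.2} ⊆ R) {s t u : S} (h : Robust ℓ τ s t)
    (hQ : (t, u) ∈ FilterFn ℓ τ R) : (s, u) ∈ FilterFn ℓ τ R := by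
  obtain ⟨X, hX, hst⟩ := (robust_iff hτ _ _).1 h
  have hXR : X ⊆ R := fun q hq => hlow ((robust_iff hτ _ _).2 ⟨X, hX, hq⟩)
  rw [filter_iff hτ hR] at hQ ⊢
  refine ⟨hR.1.trans (hXR hst) hQ.1, ?_⟩
  exact att_comp hτ (good_coupling hτ hX) (fun p hp => att_mono hXR (hX.2 p hp).2)
    (fun a b c hab hbc => hR.1.trans (hXR hab) hbc) hQ.2 s hst

lemma filter_symm (hτ : IsTransFn τ) {R : Set (S × S)} (hR : IsBisim ℓ τ R) {s t : S}
    (hQ : (s, t) ∈ FilterFn ℓ τ R) : (t, s) ∈ FilterFn ℓ τ R := by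
  rw [filter_iff hτ hR] at hQ ⊢
  exact ⟨hR.1.symm hQ.1, att_mono (fun q hq => hR.1.symm hq) (att_swap hQ.2)⟩

end

/-- Proposition 18 (loop invariant): if `R` is a bisimulation with `≃ ⊆ R ⊆ ∼`, then
`Refine(R)` is a bisimulation with `≃ ⊆ Refine(R) ⊆ ∼`. -/
theorem refine_loop_invariant {S L : Type*} [Fintype S] [Nonempty S] [Fintype L]
    (ℓ : S → L) (hℓ : ∃ a b : S, ℓ a ≠ ℓ b)
    (τ : S → S → ℝ) (hτ : IsTransFn τ)
    (R : Set (S × S)) (hR : IsBisim ℓ τ R)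
    (hlow : {p : S × S | Robust ℓ τ p.1 p.2} ⊆ R)
    (hhigh : R ⊆ {p : S × S | Bisimilar ℓ τ p.1 p.2})
    (B : Set (S × S)) (hB : IsGreatestBisimIn ℓ τ (PruneFn (FilterFn ℓ τ R)) B) :
    IsBisim ℓ τ B ∧
    {p : S × S | Robust ℓ τ p.1 p.2} ⊆ B ∧
    B ⊆ {p : S × S | Bisimilar ℓ τ p.1 p.2} := by
  refine ⟨hB.1, ?_, fun p hp => ⟨B, hB.1, hp⟩⟩
  refine hB.2.2 _ (robust_bisim hτ) ?_
  rintro ⟨s, t⟩ hst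
  have hst : Robust ℓ τ s t := hst
  refine ⟨?_, fun u => ⟨filter_left hτ hR hlow hst, fun hu => ?_⟩⟩
  · rw [filter_iff hτ hR]
    obtain ⟨X, hX, h⟩ := (robust_iff hτ _ _).1 hst
    have hXR : X ⊆ R := fun q hq => hlow ((robust_iff hτ _ _).2 ⟨X, hX, hq⟩)
    exact ⟨hXR h, att_mono hXR (hX.2 _ h).2⟩
  · have hts : Robust ℓ τ t s := (robust_bisim (ℓ := ℓ) hτ).1.symm hst
    exact filter_symm hτ hR (filter_left hτ hR hlow hts (filter_symm hτ hR hu))
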